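/- Let S ⊆ [n]² be admissible, Ā ∈ M_S and b̄ ∈ ℝⁿ with ‖Ā‖_max ≤ 1 and ‖b̄‖_∞ ≤ 1, σ > 0, and let A ~ N_S(Ā, σ²Id) and b ~ N(b̄, σ²Id) be independent. Fix k ∈ [n]. Then for every real t > 2|S|, Prob{ c_k(A,b) > t } ≤ ((1 + σ)/σ)·(4|S|²/(t − 2|S|))·√(2/π), where c_k(A,b) is the componentwise condition number of the map (A,b) ↦ (A⁻¹b)_k at (A,b) (A is almost surely invertible). -/

import Mathlib

open MeasureTheory ProbabilityTheory
open scoped ENNReal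

/-- Componentwise "distance" `d(u,v) = ‖(u−v)/v‖_∞`, valued in `[0,∞]`:
the `i`-th component of the quotient is `|u i − v i|/|v i|` if `v i ≠ 0`,
`0` if `u i = v i = 0`, and `∞` otherwise. -/
noncomputable def cwDist {ι : Type*} (u v : ι → ℝ) : ℝ≥0∞ :=
  ⨆ i, if v i ≠ 0 then ENNReal.ofReal (|u i - v i| / |v i|)
       else if u i = v i then 0 else ⊤

/-- Componentwise condition number of `F : D ⊆ ℝ^ι → ℝ^κ` at `a`:
`c^F(a) = lim_{δ→0} sup { d(F x, F a)/d(x,a) : x ∈ D, d(x,a) ≤ δ, x ≠ a }`,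
the limit being an infimum since the sup is monotone in `δ`. -/
noncomputable def cwCond {ι κ : Type*} (D : Set (ι → ℝ)) (F : (ι → ℝ) → κ → ℝ)
    (a : ι → ℝ) : ℝ≥0∞ :=
  ⨅ δ ∈ Set.Ioi (0 : ℝ≥0∞),
    ⨆ x ∈ {x ∈ D | cwDist x a ≤ δ ∧ x ≠ a}, cwDist (F x) (F a) / cwDist x a

/-- A matrix viewed as a point of `ℝ^(n×n)`. -/
def matToFun {n : ℕ} (A : Matrix (Fin n) (Fin n) ℝ) : Fin n × Fin n → ℝ :=
  fun p => A p.1 p.2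

/-- A point of `ℝ^(n×n)` viewed as a matrix. -/
def funToMat {n : ℕ} (x : Fin n × Fin n → ℝ) : Matrix (Fin n) (Fin n) ℝ :=
  Matrix.of fun i j => x (i, j)

/-- The componentwise condition number `c^det(A)` of determinant computation at `A`. -/
noncomputable def cDet {n : ℕ} (A : Matrix (Fin n) (Fin n) ℝ) : ℝ≥0∞ :=
  cwCond Set.univ (fun x (_ : Unit) => (funToMat x).det) (matToFun A)

/-- The componentwise condition number `c†_{kl}(A)` of the map `A ↦ (A⁻¹)_{kl}` at `A`. -/
noncomputable def cInv {n : ℕ} (k l : Fin n) (A : Matrix (Fin n) (Fin n) ℝ) : ℝ≥0∞ :=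
  cwCond {x | IsUnit (funToMat x).det}
    (fun x (_ : Unit) => (funToMat x)⁻¹ k l) (matToFun A)

/-- `c†(A) = max_{k,l} c†_{kl}(A)`. -/
noncomputable def cInvMax {n : ℕ} (A : Matrix (Fin n) (Fin n) ℝ) : ℝ≥0∞ :=
  ⨆ k, ⨆ l, cInv k l A

/-- A pair (matrix, right-hand side) viewed as a point of `ℝ^(n×n+n)`. -/
def pairToFun {n : ℕ} (A : Matrix (Fin n) (Fin n) ℝ) (b : Fin n → ℝ) :
    (Fin n × Fin n) ⊕ Fin n → ℝ :=
  Sum.elim (fun p => A p.1 p.2) b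

def funToMat' {n : ℕ} (x : (Fin n × Fin n) ⊕ Fin n → ℝ) : Matrix (Fin n) (Fin n) ℝ :=
  Matrix.of fun i j => x (Sum.inl (i, j))

def funToVec {n : ℕ} (x : (Fin n × Fin n) ⊕ Fin n → ℝ) : Fin n → ℝ :=
  fun i => x (Sum.inr i)

/-- The componentwise condition number `c_k(A,b)` of the map `(A,b) ↦ (A⁻¹b)_k` at `(A,b)`. -/
noncomputable def cLin {n : ℕ} (k : Fin n) (A : Matrix (Fin n) (Fin n) ℝ)
    (b : Fin n → ℝ) : ℝ≥0∞ :=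
  cwCond {x | IsUnit (funToMat' x).det}
    (fun x (_ : Unit) => (Matrix.mulVec (funToMat' x)⁻¹ (funToVec x)) k) (pairToFun A b)

/-- `c(A,b) = max_k c_k(A,b)`. -/
noncomputable def cLinMax {n : ℕ} (A : Matrix (Fin n) (Fin n) ℝ) (b : Fin n → ℝ) : ℝ≥0∞ :=
  ⨆ k, cLin k A b

instance matrixMeasurableSpace {n : ℕ} : MeasurableSpace (Matrix (Fin n) (Fin n) ℝ) :=
  inferInstanceAs (MeasurableSpace (Fin n → Fin n → ℝ))

/-- The distribution `N_S(Ā, σ²Id)` of a random sparse matrix: the entries `a_{ij}` with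
`(i,j) ∈ S` are independent Gaussians `N(ā_{ij}, σ²)`, and `a_{ij} = 0` for `(i,j) ∉ S`. -/
noncomputable def sparseGaussian {n : ℕ} (S : Finset (Fin n × Fin n))
    (Abar : Matrix (Fin n) (Fin n) ℝ) (σ : ℝ) : Measure (Matrix (Fin n) (Fin n) ℝ) :=
  (Measure.pi fun p : S => gaussianReal (Abar p.1.1 p.1.2) ⟨σ ^ 2, sq_nonneg σ⟩).map
    fun g => Matrix.of fun i j => if h : (i, j) ∈ S then g ⟨(i, j), h⟩ else 0

/-- The distribution `N(b̄, σ²Id)` on `ℝⁿ`: independent Gaussian entries `N(b̄_i, σ²)`. -/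
noncomputable def vecGaussian {n : ℕ} (bbar : Fin n → ℝ) (σ : ℝ) : Measure (Fin n → ℝ) :=
  Measure.pi fun i => gaussianReal (bbar i) ⟨σ ^ 2, sq_nonneg σ⟩

/-- `S ⊆ [n]²` is admissible when `M_S` contains an invertible matrix. -/
def Admissible {n : ℕ} (S : Finset (Fin n × Fin n)) : Prop :=
  ∃ B : Matrix (Fin n) (Fin n) ℝ, (∀ i j, (i, j) ∉ S → B i j = 0) ∧ IsUnit B.det

/-!
By Cramer's rule the `k`-th unknown is `det B / det A`, where `B` is `A` with column `k` replaced
by `b`. Relative sensitivities of a quotient add up, and by cofactor expansion that of `det M` is at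
most the sum over the columns `j` of `M` of `(∑ i, |M i j * C i j|) / |∑ i, M i j * C i j|`, with
cofactors `C i j` independent of the random column `j`.

A random linear form `∑ i, x i * C i` with coefficients independent of `x` satisfies
`s * |∑ i, x i * C i| < ∑ i, |x i * C i|` with probability `O(w / (s - 1))`, where `w` is the number
of random `x i`: one weights the event by `1 = ∑ i, |x i * C i| / ∑ l, |x l * C l|` and integrates
the `i`-th term over `x i` alone, where `|x| dμ(x) ≤ κ dx` turns it into a one-dimensional Lebesgue
integral. This makes the estimate linear in `w`.

A column with a single random entry contributes at most `1` to the sum, so only the columns with at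
least two random entries need a union bound, with a common threshold. Counting them yields the
factor `4|S|²`.
-/

section ComponentwiseCondition

variable {ι : Type*}

lemma abs_sub_le_of_cwDist_le {u v : ι → ℝ} {δ : ℝ} (hδ : 0 ≤ δ)
    (h : cwDist u v ≤ ENNReal.ofReal δ) (i : ι) : |u i - v i| ≤ δ * |v i| := by
  have hi := (le_iSup (fun i => if v i ≠ 0 then ENNReal.ofReal (|u i - v i| / |v i|)
    else if u i = v i then 0 else ⊤) i).trans h
  split_ifs at hi with hv huv
  · rwa [ENNReal.ofReal_le_ofReal_iff hδ, div_le_iff₀ (abs_pos.2 hv)] at hi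
  · rw [huv, sub_self, abs_zero]
    positivity
  · exact absurd hi (by simp)

lemma cwDist_const_unit {y y₀ : ℝ} (hy₀ : y₀ ≠ 0) :
    cwDist (fun _ : Unit => y) (fun _ => y₀) = ENNReal.ofReal (|y - y₀| / |y₀|) := by
  simp [cwDist, hy₀]

lemma cwCond_congr {κ : Type*} {D : Set (ι → ℝ)} {F G : (ι → ℝ) → κ → ℝ} {a : ι → ℝ}
    (h : Set.EqOn F G D) (ha : a ∈ D) : cwCond D F a = cwCond D G a := by
  refine iInf_congr fun δ => iInf_congr fun _ => iSup_congr fun x => iSup_congr fun hx => ?_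
  rw [h hx.1, h ha]

variable [Fintype ι] [DecidableEq ι]

/-- The first-order relative sensitivity `∑ p, |x p ∂ₚf(x)| / |f x|` of a real function to
componentwise relative perturbations of its argument. It bounds the componentwise condition
number, and is additive enough to be computed factor by factor. -/
noncomputable def relSensitivity (f : (ι → ℝ) → ℝ) (x : ι → ℝ) : ℝ :=
  (∑ p, |x p * fderiv ℝ f x (Pi.single p 1)|) / |f x|

lemma abs_apply_le_mul_sum {L : (ι → ℝ) →L[ℝ] ℝ} {v a : ι → ℝ} {δ : ℝ}
    (h : ∀ i, |v i| ≤ δ * |a i|) : |L v| ≤ δ * ∑ i, |a i * L (Pi.single i 1)| := by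
  calc |L v| = |∑ i, v i * L (Pi.single i 1)| := by
        conv_lhs => rw [← Finset.univ_sum_single v, map_sum]
        congr 1
        refine Finset.sum_congr rfl fun i _ => ?_
        rw [← smul_eq_mul, ← map_smul, ← Pi.single_smul, smul_eq_mul, mul_one]
    _ ≤ ∑ i, |v i * L (Pi.single i 1)| := Finset.abs_sum_le_sum_abs _ _
    _ ≤ ∑ i, δ * |a i * L (Pi.single i 1)| := by
        gcongr with i
        rw [abs_mul, abs_mul, ← mul_assoc]
        gcongr
        exact h i
    _ = δ * ∑ i, |a i * L (Pi.single i 1)| := (Finset.mul_sum _ _ _).symm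

lemma exists_abs_sub_le_of_differentiableAt {f : (ι → ℝ) → ℝ} {a : ι → ℝ}
    (hf : DifferentiableAt ℝ f a) {ε : ℝ} (hε : 0 < ε) :
    ∃ δ₀ > 0, ∀ x, ∀ δ ∈ Set.Icc 0 δ₀, (∀ i, |x i - a i| ≤ δ * |a i|) →
      |f x - f a| ≤ δ * (∑ i, |a i * fderiv ℝ f a (Pi.single i 1)| + ε) := by
  have ha : 0 < ‖a‖ + 1 := by positivity
  obtain ⟨r, hr, hball⟩ := Metric.eventually_nhds_iff.1
    (hf.hasFDerivAt.isLittleO.def (div_pos hε ha))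
  refine ⟨r / (2 * (‖a‖ + 1)), by positivity, fun x δ hδ hx => ?_⟩
  have hnorm : ‖x - a‖ ≤ δ * ‖a‖ :=
    (pi_norm_le_iff_of_nonneg (mul_nonneg hδ.1 (norm_nonneg a))).2 fun i =>
      (hx i).trans (mul_le_mul_of_nonneg_left (norm_le_pi_norm a i) hδ.1)
  have hdist : dist x a < r := by
    rw [dist_eq_norm]
    calc ‖x - a‖ ≤ δ * ‖a‖ := hnorm
      _ ≤ r / (2 * (‖a‖ + 1)) * (‖a‖ + 1) := by
          gcongr
          exacts [hδ.2, by linarith]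
      _ = r / 2 := by field_simp
      _ < r := half_lt_self hr
  have hsmall : ε / (‖a‖ + 1) * (δ * ‖a‖) ≤ δ * ε := by
    rw [div_mul_eq_mul_div, div_le_iff₀ ha]
    nlinarith [mul_nonneg hδ.1 hε.le]
  calc |f x - f a| ≤ |f x - f a - fderiv ℝ f a (x - a)| + |fderiv ℝ f a (x - a)| := by
        simpa using abs_add_le (f x - f a - fderiv ℝ f a (x - a)) (fderiv ℝ f a (x - a))
    _ ≤ ε / (‖a‖ + 1) * (δ * ‖a‖) + δ * ∑ i, |a i * fderiv ℝ f a (Pi.single i 1)| := by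
        gcongr
        · exact (hball hdist).trans (by gcongr)
        · exact abs_apply_le_mul_sum hx
    _ ≤ δ * (∑ i, |a i * fderiv ℝ f a (Pi.single i 1)| + ε) := by linarith

lemma cwCond_le_relSensitivity {D : Set (ι → ℝ)} {f : (ι → ℝ) → ℝ} {a : ι → ℝ}
    (hf : DifferentiableAt ℝ f a) (hfa : f a ≠ 0) :
    cwCond D (fun x (_ : Unit) => f x) a ≤ ENNReal.ofReal (relSensitivity f a) := by
  refine ENNReal.le_of_forall_pos_le_add fun ε hε _ => ?_
  have hfa' : 0 < |f a| := abs_pos.2 hfa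
  obtain ⟨δ₀, hδ₀, hbound⟩ := exists_abs_sub_le_of_differentiableAt hf
    (mul_pos (NNReal.coe_pos.2 hε) hfa')
  refine iInf₂_le_of_le (ENNReal.ofReal δ₀) (ENNReal.ofReal_pos.2 hδ₀)
    (iSup₂_le fun x hx => ENNReal.div_le_of_le_mul ?_)
  have hfin : cwDist x a ≠ ⊤ := ne_top_of_le_ne_top ENNReal.ofReal_ne_top hx.2.1
  set δ := (cwDist x a).toReal
  have hδ : 0 ≤ δ := ENNReal.toReal_nonneg
  have hxδ : cwDist x a = ENNReal.ofReal δ := (ENNReal.ofReal_toReal hfin).symm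
  have hsub := hbound x δ ⟨hδ, ENNReal.toReal_le_of_le_ofReal hδ₀.le hx.2.1⟩
    (abs_sub_le_of_cwDist_le hδ hxδ.le)
  rw [cwDist_const_unit hfa, hxδ, ← ENNReal.ofReal_coe_nnreal,
    ← ENNReal.ofReal_add (by unfold relSensitivity; positivity) ε.coe_nonneg,
    ← ENNReal.ofReal_mul (by unfold relSensitivity; positivity)]
  refine ENNReal.ofReal_le_ofReal ((div_le_iff₀ hfa').2 (hsub.trans (le_of_eq ?_)))
  rw [relSensitivity]
  field_simp

lemma relSensitivity_div_le {f g : (ι → ℝ) → ℝ} {x : ι → ℝ} (hf : DifferentiableAt ℝ f x)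
    (hg : DifferentiableAt ℝ g x) (hfx : f x ≠ 0) (hgx : g x ≠ 0) :
    relSensitivity (fun y => f y / g y) x ≤ relSensitivity f x + relSensitivity g x := by
  have hderiv : fderiv ℝ (fun y => f y / g y) x =
      (f x / g x) • ((f x)⁻¹ • fderiv ℝ f x - (g x)⁻¹ • fderiv ℝ g x) := by
    have hinv := (hasDerivAt_inv hgx).comp_hasFDerivAt x hg.hasFDerivAt
    refine (hf.hasFDerivAt.mul hinv).fderiv.trans ?_
    ext v
    simp only [neg_smul, smul_neg, Function.comp_apply, add_apply, neg_apply, smul_apply,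
      smul_eq_mul, sub_apply]
    field_simp
    ring
  simp only [relSensitivity, hderiv, Finset.sum_div, ← Finset.sum_add_distrib]
  gcongr with p
  rw [← abs_div, ← abs_div, ← abs_div]
  refine le_of_eq_of_le (congrArg _ ?_) (abs_sub _ _)
  simp only [smul_apply, sub_apply, smul_eq_mul]
  field_simp

end ComponentwiseCondition

section DetColCond

variable {m : Type*} [Fintype m] [DecidableEq m]

/-- The first-order relative sensitivity of `det M` to relative perturbations of the entries of
column `j`: by cofactor expansion, `adjugate M j i` is the derivative of `det M` with respect to
`M i j`. It takes the junk value `0` when `det M = 0`. -/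
noncomputable def detColCond (M : Matrix m m ℝ) (j : m) : ℝ :=
  (∑ i, |M i j * M.adjugate j i|) / |M.det|

lemma detColCond_le_one {M : Matrix m m ℝ} {i₀ j : m} (h : ∀ i ≠ i₀, M i j = 0) :
    detColCond M j ≤ 1 := by
  have hzero : ∀ i ≠ i₀, M i j * M.adjugate j i = 0 := fun i hi => by rw [h i hi, zero_mul]
  rw [detColCond, Matrix.det_eq_sum_mul_adjugate_col M j, Fintype.sum_eq_single i₀ hzero,
    Fintype.sum_eq_single i₀ fun i hi => by rw [hzero i hi, abs_zero]]
  exact div_self_le_one _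

lemma lt_detColCond {M : Matrix m m ℝ} {j : m} {s : ℝ} (hs : 0 ≤ s) (h : s < detColCond M j) :
    s * |∑ i, M i j * M.adjugate j i| < ∑ i, |M i j * M.adjugate j i| := by
  rw [← Matrix.det_eq_sum_mul_adjugate_col]
  refine (lt_div_iff₀ (abs_pos.2 fun hdet => ?_)).1 h
  rw [detColCond, hdet, abs_zero, div_zero] at h
  exact h.not_ge hs

lemma adjugate_eq_det_updateCol (M : Matrix m m ℝ) (i j : m) :
    M.adjugate j i = (M.updateCol j (Pi.single i 1)).det := by
  rw [← Matrix.cramer_apply, Matrix.cramer_eq_adjugate_mulVec, Matrix.mulVec_single_one,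
    Matrix.col_apply]

lemma adjugate_eq_of_forall_ne {M N : Matrix m m ℝ} {j : m} (h : ∀ i, ∀ l ≠ j, M i l = N i l)
    (i : m) : M.adjugate j i = N.adjugate j i := by
  have hupdate : M.updateCol j (Pi.single i 1) = N.updateCol j (Pi.single i 1) := by
    ext i' l
    rcases eq_or_ne l j with rfl | hl
    · rw [Matrix.updateCol_self, Matrix.updateCol_self]
    · rw [Matrix.updateCol_ne hl, Matrix.updateCol_ne hl, h i' l hl]
  rw [adjugate_eq_det_updateCol, adjugate_eq_det_updateCol, hupdate]

end DetColCond

section CoordMatrix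

variable {ι m : Type*}

/-- The square matrix whose `(i, j)` entry is the coordinate `e i j` of the data vector `x`. Both
`A` and the matrix obtained from it by replacing a column by `b` are of this form. -/
def coordMatrix (e : m → m → ι) (x : ι → ℝ) : Matrix m m ℝ :=
  Matrix.of fun i j => x (e i j)

lemma coordMatrix_apply (e : m → m → ι) (x : ι → ℝ) (i j : m) :
    coordMatrix e x i j = x (e i j) :=
  rfl

variable [Fintype m] [DecidableEq m]

lemma hasFDerivAt_det_coordMatrix [Finite ι] (e : m → m → ι) (x : ι → ℝ) :
    HasFDerivAt (fun y => (coordMatrix e y).det)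
      (∑ i, ∑ j, (coordMatrix e x).adjugate j i •
        ContinuousLinearMap.proj (R := ℝ) (φ := fun _ : ι => ℝ) (e i j)) x := by
  have := Fintype.ofFinite ι
  let detRows : ContinuousMultilinearMap ℝ (fun _ : m => m → ℝ) ℝ :=
    ⟨Matrix.detRowAlternating.toMultilinearMap, Continuous.matrix_det continuous_id⟩
  let row (i : m) : (ι → ℝ) →L[ℝ] (m → ℝ) := ContinuousLinearMap.pi fun j =>
    ContinuousLinearMap.proj (e i j)
  refine (HasFDerivAt.multilinear_comp (f := detRows)
    fun i => (row i).hasFDerivAt).congr_fderiv ?_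
  ext v
  simp only [sum_apply, ContinuousLinearMap.comp_apply,
    ContinuousMultilinearMap.toContinuousLinearMap_apply, smul_apply,
    ContinuousLinearMap.proj_apply, smul_eq_mul]
  refine Finset.sum_congr rfl fun i _ => ?_
  change ((coordMatrix e x).updateRow i fun j => v (e i j)).det = _
  rw [← Matrix.cramer_transpose_apply, Matrix.cramer_eq_adjugate_mulVec,
    ← Matrix.adjugate_transpose]
  rfl

lemma relSensitivity_det_coordMatrix_le [Fintype ι] [DecidableEq ι] (e : m → m → ι) (x : ι → ℝ) :
    relSensitivity (fun y => (coordMatrix e y).det) x ≤ ∑ j, detColCond (coordMatrix e x) j := by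
  simp only [relSensitivity, detColCond, ← Finset.sum_div]
  gcongr
  rw [(hasFDerivAt_det_coordMatrix e x).fderiv]
  calc ∑ p, |x p * (∑ i, ∑ j, (coordMatrix e x).adjugate j i •
          ContinuousLinearMap.proj (R := ℝ) (φ := fun _ : ι => ℝ) (e i j)) (Pi.single p 1)|
      ≤ ∑ p, ∑ i, ∑ j, if e i j = p then |x (e i j) * (coordMatrix e x).adjugate j i| else 0 := by
        gcongr with p
        simp only [sum_apply, smul_apply, ContinuousLinearMap.proj_apply, smul_eq_mul,
          Finset.mul_sum]
        refine (Finset.abs_sum_le_sum_abs _ _).trans (Finset.sum_le_sum fun i _ =>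
          (Finset.abs_sum_le_sum_abs _ _).trans (Finset.sum_le_sum fun j _ => ?_))
        rw [Pi.single_apply]
        split_ifs with h
        · rw [h, mul_one]
        · rw [mul_zero, mul_zero, abs_zero]
    _ = ∑ j, ∑ i, |coordMatrix e x i j * (coordMatrix e x).adjugate j i| := by
        rw [Finset.sum_comm, Finset.sum_comm (γ := m) (α := m)]
        refine Finset.sum_congr rfl fun i _ => ?_
        rw [Finset.sum_comm]
        simp only [Finset.sum_ite_eq, Finset.mem_univ, if_true, coordMatrix_apply]

lemma measurable_adjugate_coordMatrix [Countable ι] (e : m → m → ι) (i j : m) :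
    Measurable fun x => (coordMatrix e x).adjugate i j :=
  ((Continuous.matrix_adjugate (by unfold coordMatrix; fun_prop)).matrix_elem i j).measurable

end CoordMatrix

section CramerRule

variable {n : ℕ}

/-- The position of the matrix entry `(i, j)` in the data vector of a linear system. -/
def matrixIndex (i j : Fin n) : (Fin n × Fin n) ⊕ Fin n := Sum.inl (i, j)

/-- The position, in the data vector of the system `(A, b)`, of the `(i, j)` entry of the
numerator matrix in Cramer's rule for the `k`-th unknown: `A` with column `k` replaced by `b`. -/
def cramerIndex (k i j : Fin n) : (Fin n × Fin n) ⊕ Fin n :=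
  if j = k then Sum.inr i else Sum.inl (i, j)

lemma coordMatrix_matrixIndex (x : (Fin n × Fin n) ⊕ Fin n → ℝ) :
    coordMatrix matrixIndex x = funToMat' x :=
  rfl

lemma coordMatrix_cramerIndex (k : Fin n) (x : (Fin n × Fin n) ⊕ Fin n → ℝ) :
    coordMatrix (cramerIndex k) x = (funToMat' x).updateCol k (funToVec x) := by
  ext i j
  rw [Matrix.updateCol_apply]
  exact (apply_ite x _ _ _)

lemma inv_mulVec_apply_eq_div_det {A : Matrix (Fin n) (Fin n) ℝ} (hA : IsUnit A.det)
    (b : Fin n → ℝ) (k : Fin n) : (A⁻¹.mulVec b) k = (A.updateCol k b).det / A.det := by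
  rw [eq_div_iff hA.ne_zero, mul_comm, ← smul_eq_mul, ← Pi.smul_apply,
    Matrix.det_smul_inv_mulVec_eq_cramer A b hA, Matrix.cramer_apply]

lemma cLin_le_sum_detColCond {A : Matrix (Fin n) (Fin n) ℝ} {b : Fin n → ℝ} {k : Fin n}
    (hA : A.det ≠ 0) (hAb : (A.updateCol k b).det ≠ 0) :
    cLin k A b ≤ ENNReal.ofReal
      (∑ j, detColCond A j + ∑ j, detColCond (A.updateCol k b) j) := by
  set x := pairToFun A b
  let f (y : (Fin n × Fin n) ⊕ Fin n → ℝ) := (coordMatrix (cramerIndex k) y).det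
  let g (y : (Fin n × Fin n) ⊕ Fin n → ℝ) := (coordMatrix matrixIndex y).det
  have hfx : coordMatrix (cramerIndex k) x = A.updateCol k b := coordMatrix_cramerIndex k x
  have hgx : coordMatrix matrixIndex x = A := rfl
  have hf : DifferentiableAt ℝ f x := (hasFDerivAt_det_coordMatrix _ x).differentiableAt
  have hg : DifferentiableAt ℝ g x := (hasFDerivAt_det_coordMatrix _ x).differentiableAt
  have hg₀ : g x ≠ 0 := hA
  have hf₀ : f x ≠ 0 := by simpa only [f, hfx]
  calc cLin k A b
      = cwCond {y | IsUnit (funToMat' y).det} (fun y (_ : Unit) => f y / g y) x := by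
        refine cwCond_congr (fun y hy => funext fun _ => ?_) hA.isUnit
        simp only [f, g, coordMatrix_cramerIndex, coordMatrix_matrixIndex]
        exact inv_mulVec_apply_eq_div_det hy _ k
    _ ≤ ENNReal.ofReal (relSensitivity (fun y => f y / g y) x) :=
        cwCond_le_relSensitivity (hf.mul (hg.fun_inv hg₀)) (div_ne_zero hf₀ hg₀)
    _ ≤ _ := by
        refine ENNReal.ofReal_le_ofReal ((relSensitivity_div_le hf hg hf₀ hg₀).trans ?_)
        rw [add_comm]
        have hsumf := relSensitivity_det_coordMatrix_le (cramerIndex k) x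
        have hsumg := relSensitivity_det_coordMatrix_le matrixIndex x
        rw [hfx] at hsumf
        rw [hgx] at hsumg
        exact add_le_add hsumg hsumf

end CramerRule

section ProductMeasure

variable {ι : Type*} [Fintype ι] [DecidableEq ι] {X : ι → Type*} [∀ i, MeasurableSpace (X i)]
  {μ : ∀ i, Measure (X i)} [∀ i, IsProbabilityMeasure (μ i)]

lemma lintegral_pi_le_of_forall_lintegral_update_le {f : (∀ i, X i) → ℝ≥0∞} (hf : Measurable f)
    (i : ι) {c : ℝ≥0∞} (h : ∀ x, ∫⁻ a, f (Function.update x i a) ∂μ i ≤ c) :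
    ∫⁻ x, f x ∂Measure.pi μ ≤ c := by
  have x₀ : ∀ i, X i := fun i => (nonempty_of_isProbabilityMeasure (μ i)).some
  calc ∫⁻ x, f x ∂Measure.pi μ
      = lmarginal μ (Finset.univ.erase i) (fun x => ∫⁻ a, f (Function.update x i a) ∂μ i) x₀ := by
        rw [lintegral_eq_lmarginal_univ x₀, lmarginal_erase' _ hf (Finset.mem_univ i)]
    _ ≤ lmarginal μ (Finset.univ.erase i) (fun _ => c) x₀ := lmarginal_mono h x₀
    _ = c := by simp [lmarginal]

lemma ae_pi_of_forall_ae_update {P : (∀ i, X i) → Prop} (hP : MeasurableSet {x | P x})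
    {z : ∀ i, X i} (hz : P z)
    (h : ∀ i x, P x → x i = z i → ∀ᵐ a ∂μ i, P (Function.update x i a)) :
    ∀ᵐ x ∂Measure.pi μ, P x := by
  have hmeas : Measurable ({x | P x}ᶜ.indicator (1 : (∀ i, X i) → ℝ≥0∞)) :=
    measurable_one.indicator hP.compl
  have hnull : ∀ (s : Finset ι) (x : ∀ i, X i), P (s.piecewise z x) →
      lmarginal μ s ({x | P x}ᶜ.indicator 1) x = 0 := by
    intro s
    induction s using Finset.induction_on with
    | empty =>
      intro x hx
      simpa using hx
    | insert i s hi ih =>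
      intro x hx
      have hupdate : ∀ a, Function.update ((insert i s).piecewise z x) i a =
          s.piecewise z (Function.update x i a) := by
        intro a
        rw [Finset.piecewise_insert, Function.update_idem,
          Finset.update_piecewise_of_notMem _ _ _ hi]
      rw [lmarginal_insert _ hmeas hi]
      refine (lintegral_congr_ae ?_).trans lintegral_zero
      filter_upwards [h i _ hx (by simp)] with a ha
      exact ih _ (hupdate a ▸ ha)
  change Measure.pi μ {x | P x}ᶜ = 0
  rw [← lintegral_indicator_one hP.compl, lintegral_eq_lmarginal_univ z]
  exact hnull _ z (by simpa using hz)

end ProductMeasure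

section OneVariable

lemma exists_Ioo_of_mul_abs_add_lt {d w s : ℝ} (hs : 1 < s) (hdw : |d| ≤ w) :
    ∃ p q m : ℝ, q - p ≤ 2 / (s - 1) * m ∧
      ∀ x, s * |x + d| < |x| + w → x ∈ Set.Ioo p q ∧ m ≤ |x| + w := by
  wlog hd : 0 ≤ d generalizing d
  · obtain ⟨p, q, m, hlen, h⟩ := this (d := -d) (by rwa [abs_neg]) (by linarith)
    refine ⟨-q, -p, m, by linarith, fun x hx => ?_⟩
    obtain ⟨⟨hp, hq⟩, hm⟩ := h (-x) (by rwa [← neg_add, abs_neg, abs_neg])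
    exact ⟨⟨by linarith, by linarith⟩, by rwa [abs_neg] at hm⟩
  rw [abs_of_nonneg hd] at hdw
  have hs₀ : 0 < s - 1 := by linarith
  have hs₁ : 0 < s + 1 := by linarith
  have hleft : ∀ x, s * |x + d| < |x| + w → -d - (d + w) / (s - 1) < x := by
    intro x hx
    rw [sub_lt_comm, lt_div_iff₀ hs₀]
    rcases abs_cases (x + d) with h₁ | h₁ <;> rcases abs_cases x with h₂ | h₂ <;> nlinarith
  rcases le_or_gt w (s * d) with hw | hw
  · refine ⟨-d - (d + w) / (s - 1), -d + (d + w) / (s + 1), s * (d + w) / (s + 1), ?_,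
      fun x hx => ⟨⟨hleft x hx, ?_⟩, ?_⟩⟩
    · apply le_of_eq
      field_simp
      ring
    · rw [← sub_lt_iff_lt_add', lt_div_iff₀ hs₁]
      rcases abs_cases (x + d) with h₁ | h₁ <;> rcases abs_cases x with h₂ | h₂ <;> nlinarith
    · rw [div_le_iff₀ hs₁]
      rcases abs_cases (x + d) with h₁ | h₁ <;> rcases abs_cases x with h₂ | h₂ <;> nlinarith
  · refine ⟨-d - (d + w) / (s - 1), -d + (w - d) / (s - 1), w, ?_,
      fun x hx => ⟨⟨hleft x hx, ?_⟩, by linarith [abs_nonneg x]⟩⟩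
    · apply le_of_eq
      field_simp
      ring
    · rw [← sub_lt_iff_lt_add', lt_div_iff₀ hs₀]
      rcases abs_cases (x + d) with h₁ | h₁ <;> rcases abs_cases x with h₂ | h₂ <;> nlinarith

lemma setLIntegral_abs_div_le {C D w s : ℝ} (hs : 1 < s) (hD : |D| ≤ w) :
    ∫⁻ a in {a | s * |a * C + D| < |a * C| + w}, ENNReal.ofReal (|C| / (|a * C| + w)) ≤
      ENNReal.ofReal (2 / (s - 1)) := by
  rcases eq_or_ne C 0 with rfl | hC
  · simp
  obtain ⟨p, q, m, hlen, h⟩ := exists_Ioo_of_mul_abs_add_lt hs hD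
  rcases le_or_gt m 0 with hm | hm
  · have hempty : {a | s * |a * C + D| < |a * C| + w} = ∅ := by
      refine Set.eq_empty_of_forall_notMem fun a ha => ?_
      have : 2 / (s - 1) * m ≤ 0 :=
        mul_nonpos_of_nonneg_of_nonpos (div_nonneg two_pos.le (by linarith)) hm
      linarith [(h _ ha).1.1, (h _ ha).1.2]
    simp only [hempty, Measure.restrict_empty, lintegral_zero_measure, zero_le]
  calc ∫⁻ a in {a | s * |a * C + D| < |a * C| + w}, ENNReal.ofReal (|C| / (|a * C| + w))
      ≤ ∫⁻ _ in {a | s * |a * C + D| < |a * C| + w}, ENNReal.ofReal (|C| / m) := by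
        refine setLIntegral_mono measurable_const fun a ha => ENNReal.ofReal_le_ofReal ?_
        have := (h _ ha).2
        gcongr
    _ ≤ ∫⁻ _ in (· * C) ⁻¹' Set.Ioo p q, ENNReal.ofReal (|C| / m) :=
        lintegral_mono_set fun a ha => (h _ ha).1
    _ = ENNReal.ofReal ((q - p) / m) := by
        rw [setLIntegral_const, Real.volume_preimage_mul_right hC, Real.volume_Ioo,
          ← ENNReal.ofReal_mul (abs_nonneg _), ← ENNReal.ofReal_mul (by positivity), abs_inv]
        congr 1
        field_simp
    _ ≤ ENNReal.ofReal (2 / (s - 1)) := ENNReal.ofReal_le_ofReal ((div_le_iff₀ hm).2 hlen)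

end OneVariable

/-- The law `μ` on `ℝ` has a density at most `κ / |x|`. The condition is stated as
`|x| dμ(x) ≤ κ dx`, so that it does not constrain an atom at `0`: a vanishing matrix entry
satisfies it with `κ = 0`. -/
def AbsDensityLE (μ : Measure ℝ) (κ : ℝ≥0∞) : Prop :=
  μ.withDensity (fun x => ‖x‖ₑ) ≤ κ • volume

namespace AbsDensityLE

variable {μ : Measure ℝ} {κ κ' : ℝ≥0∞}

lemma mono (h : AbsDensityLE μ κ) (hκ : κ ≤ κ') : AbsDensityLE μ κ' :=
  h.trans (Measure.le_iff.2 fun s _ => by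
    simpa only [Measure.smul_apply, smul_eq_mul] using mul_le_mul_left hκ (volume s))

lemma dirac_zero : AbsDensityLE (Measure.dirac 0) 0 := by
  have h : (Measure.dirac (0 : ℝ)).withDensity (fun x => ‖x‖ₑ) = 0 := by
    rw [withDensity_eq_zero_iff measurable_enorm.aemeasurable, ae_dirac_eq]
    exact enorm_zero
  rw [AbsDensityLE, h, zero_smul]

lemma lintegral_enorm_mul_le (h : AbsDensityLE μ κ) {f : ℝ → ℝ≥0∞} (hf : Measurable f) :
    ∫⁻ x, ‖x‖ₑ * f x ∂μ ≤ κ * ∫⁻ x, f x :=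
  calc ∫⁻ x, ‖x‖ₑ * f x ∂μ = ∫⁻ x, f x ∂μ.withDensity (fun x => ‖x‖ₑ) :=
        (lintegral_withDensity_eq_lintegral_mul μ measurable_enorm hf).symm
    _ ≤ ∫⁻ x, f x ∂(κ • volume) := lintegral_mono' h le_rfl
    _ = κ * ∫⁻ x, f x := lintegral_smul_measure _ _

lemma setLIntegral_abs_mul_div_le (h : AbsDensityLE μ κ) {C D w s : ℝ} (hs : 1 < s)
    (hD : |D| ≤ w) :
    ∫⁻ a in {a | s * |a * C + D| < |a * C| + w}, ENNReal.ofReal (|a * C| / (|a * C| + w)) ∂μ ≤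
      κ * ENNReal.ofReal (2 / (s - 1)) := by
  have hE : MeasurableSet {a | s * |a * C + D| < |a * C| + w} :=
    measurableSet_lt (by fun_prop) (by fun_prop)
  calc ∫⁻ a in {a | s * |a * C + D| < |a * C| + w}, ENNReal.ofReal (|a * C| / (|a * C| + w)) ∂μ
      = ∫⁻ a, ‖a‖ₑ * {a | s * |a * C + D| < |a * C| + w}.indicator
          (fun a => ENNReal.ofReal (|C| / (|a * C| + w))) a ∂μ := by
        rw [← lintegral_indicator hE]
        refine lintegral_congr fun a => ?_
        rw [← Set.indicator_mul_right _ fun a : ℝ => ‖a‖ₑ]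
        refine congrFun (congrArg _ (funext fun a => ?_)) a
        rw [Real.enorm_eq_ofReal_abs, ← ENNReal.ofReal_mul (abs_nonneg a), ← mul_div_assoc, abs_mul]
    _ ≤ κ * ∫⁻ a in {a | s * |a * C + D| < |a * C| + w},
          ENNReal.ofReal (|C| / (|a * C| + w)) := by
        rw [← lintegral_indicator hE]
        exact h.lintegral_enorm_mul_le (Measurable.indicator (by fun_prop) hE)
    _ ≤ κ * ENNReal.ofReal (2 / (s - 1)) := by
        gcongr
        exact setLIntegral_abs_div_le hs hD

end AbsDensityLE

lemma abs_mul_gaussianPDFReal_le (m : ℝ) {v : NNReal} (hv : v ≠ 0) (x : ℝ) :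
    |x| * gaussianPDFReal m v x ≤ (|m| + √v) / √(2 * Real.pi * v) := by
  have hσ : 0 < √(v : ℝ) := Real.sqrt_pos.2 (NNReal.coe_pos.2 (pos_iff_ne_zero.2 hv))
  set u := |x - m| / √v with hu
  have hexp : -(x - m) ^ 2 / (2 * v) = -(u ^ 2 / 2) := by
    rw [hu, div_pow, sq_abs, Real.sq_sqrt v.coe_nonneg]
    ring
  have hx : |x| ≤ |m| + √v * u := by
    rw [hu, mul_div_cancel₀ _ hσ.ne']
    linarith [abs_sub_abs_le_abs_sub x m]
  have hexp_le : Real.exp (-(u ^ 2 / 2)) ≤ 1 := Real.exp_le_one_iff.2 (by linarith [sq_nonneg u])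
  have hmul_exp_le : u * Real.exp (-(u ^ 2 / 2)) ≤ 1 := by
    rw [Real.exp_neg, ← div_eq_mul_inv, div_le_one (Real.exp_pos _)]
    nlinarith [Real.add_one_le_exp (u ^ 2 / 2), sq_nonneg (u - 1)]
  have hnum : |x| * Real.exp (-(u ^ 2 / 2)) ≤ |m| + √v := by
    calc |x| * Real.exp (-(u ^ 2 / 2)) ≤ (|m| + √v * u) * Real.exp (-(u ^ 2 / 2)) := by gcongr
      _ = |m| * Real.exp (-(u ^ 2 / 2)) + √v * (u * Real.exp (-(u ^ 2 / 2))) := by ring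
      _ ≤ |m| * 1 + √v * 1 := by gcongr
      _ = |m| + √v := by ring
  rw [gaussianPDFReal, hexp, mul_left_comm, inv_mul_eq_div]
  gcongr

lemma absDensityLE_gaussianReal (m : ℝ) {v : NNReal} (hv : v ≠ 0) :
    AbsDensityLE (gaussianReal m v) (ENNReal.ofReal ((|m| + √v) / √(2 * Real.pi * v))) := by
  rw [AbsDensityLE, gaussianReal_of_var_ne_zero m hv,
    ← withDensity_mul _ (measurable_gaussianPDF m v) measurable_enorm, ← withDensity_const]
  refine withDensity_mono (Filter.Eventually.of_forall fun x => ?_)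
  rw [Pi.mul_apply, gaussianPDF, Real.enorm_eq_ofReal_abs, mul_comm,
    ← ENNReal.ofReal_mul (abs_nonneg x)]
  exact ENNReal.ofReal_le_ofReal (abs_mul_gaussianPDFReal_le m hv x)

section RandomLinearForm

variable {ι m : Type*} [Fintype ι] [DecidableEq ι] [Fintype m] {μ : ι → Measure ℝ}
  [∀ i, IsProbabilityMeasure (μ i)] {e : m → ι} {C : m → (ι → ℝ) → ℝ} {s : ℝ}

lemma setLIntegral_pi_abs_term_div_le (he : Function.Injective e) (hC : ∀ l, Measurable (C l))
    (hCe : ∀ i l x a, C l (Function.update x (e i) a) = C l x) (hs : 1 < s) (i : m) {κ : ℝ≥0∞}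
    (hκ : AbsDensityLE (μ (e i)) κ) :
    ∫⁻ x in {x | s * |∑ l, x (e l) * C l x| < ∑ l, |x (e l) * C l x|},
        ENNReal.ofReal (|x (e i) * C i x| / ∑ l, |x (e l) * C l x|) ∂Measure.pi μ ≤
      κ * ENNReal.ofReal (2 / (s - 1)) := by
  classical
  have hE : MeasurableSet {x | s * |∑ l, x (e l) * C l x| < ∑ l, |x (e l) * C l x|} :=
    measurableSet_lt (by fun_prop) (by fun_prop)
  rw [← lintegral_indicator hE]
  refine lintegral_pi_le_of_forall_lintegral_update_le
    (Measurable.indicator (by fun_prop) hE) (e i) fun x => ?_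
  have hsum : ∀ (g : ℝ → ℝ) (a : ℝ),
      ∑ l, g (Function.update x (e i) a (e l) * C l x) =
        g (a * C i x) + ∑ l ∈ Finset.univ.erase i, g (x (e l) * C l x) := by
    intro g a
    rw [← Finset.add_sum_erase _ _ (Finset.mem_univ i), Function.update_self]
    congr 1
    refine Finset.sum_congr rfl fun l hl => ?_
    rw [Function.update_of_ne (he.ne (Finset.ne_of_mem_erase hl))]
  refine le_of_eq_of_le ?_ (hκ.setLIntegral_abs_mul_div_le (C := C i x) hs
    (Finset.abs_sum_le_sum_abs (fun l => x (e l) * C l x) (Finset.univ.erase i)))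
  rw [← lintegral_indicator (measurableSet_lt (by fun_prop) (by fun_prop))]
  refine lintegral_congr fun a => ?_
  simp only [Set.indicator_apply, Set.mem_ofPred_eq, hCe, hsum (fun y => y), hsum (fun y => |y|),
    Function.update_self]

lemma measure_pi_mul_abs_linearForm_lt_le (he : Function.Injective e)
    (hC : ∀ l, Measurable (C l)) (hCe : ∀ i l x a, C l (Function.update x (e i) a) = C l x)
    (hs : 1 < s) {κ : m → ℝ≥0∞} (hκ : ∀ i, AbsDensityLE (μ (e i)) (κ i)) :
    Measure.pi μ {x | s * |∑ l, x (e l) * C l x| < ∑ l, |x (e l) * C l x|} ≤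
      (∑ i, κ i) * ENNReal.ofReal (2 / (s - 1)) := by
  set E := {x : ι → ℝ | s * |∑ l, x (e l) * C l x| < ∑ l, |x (e l) * C l x|}
  have hE : MeasurableSet E := measurableSet_lt (by fun_prop) (by fun_prop)
  have hone : ∀ x ∈ E,
      1 = ∑ i, ENNReal.ofReal (|x (e i) * C i x| / ∑ l, |x (e l) * C l x|) := by
    intro x hx
    have hpos : 0 < ∑ l, |x (e l) * C l x| := lt_of_le_of_lt (by positivity) hx
    rw [← ENNReal.ofReal_sum_of_nonneg fun i _ => by positivity, ← Finset.sum_div,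
      div_self hpos.ne', ENNReal.ofReal_one]
  calc Measure.pi μ E = ∫⁻ _ in E, 1 ∂Measure.pi μ := (setLIntegral_one E).symm
    _ = ∑ i, ∫⁻ x in E,
          ENNReal.ofReal (|x (e i) * C i x| / ∑ l, |x (e l) * C l x|) ∂Measure.pi μ := by
        rw [setLIntegral_congr_fun hE hone, lintegral_finsetSum _ fun i _ => by fun_prop]
    _ ≤ ∑ i, κ i * ENNReal.ofReal (2 / (s - 1)) :=
        Finset.sum_le_sum fun i _ => setLIntegral_pi_abs_term_div_le he hC hCe hs i (hκ i)
    _ = (∑ i, κ i) * ENNReal.ofReal (2 / (s - 1)) := (Finset.sum_mul _ _ _).symm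

end RandomLinearForm

lemma measure_lt_sum_le {α Ω : Type*} [Fintype α] [MeasurableSpace Ω] {P : Measure Ω}
    {X : α → Ω → ℝ} {J : Finset α} {c : α → ℝ≥0∞} (hX : ∀ a ∉ J, ∀ᵐ ω ∂P, X a ω ≤ 1)
    (hc : ∀ a ∈ J, ∀ s > 1, P {ω | s < X a ω} ≤ c a * ENNReal.ofReal (2 / (s - 1))) {t : ℝ}
    (ht : Fintype.card α < t) :
    P {ω | t < ∑ a, X a ω} ≤
      (∑ a ∈ J, c a) * ENNReal.ofReal (2 * J.card / (t - Fintype.card α)) := by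
  classical
  set r : ℝ := (t - Fintype.card α) / J.card
  have hexceed : ∀ᵐ ω ∂P, t < ∑ a, X a ω → ω ∈ ⋃ a ∈ J, {ω | 1 + r < X a ω} := by
    have hX' : ∀ᵐ ω ∂P, ∀ a ∉ J, X a ω ≤ 1 :=
      ae_all_iff.2 fun a => by by_cases ha : a ∈ J <;> simp [ha, hX]
    filter_upwards [hX'] with ω hω ht'
    by_contra hle
    simp only [Set.mem_iUnion, Set.mem_ofPred_eq, not_exists, not_lt] at hle
    refine ht'.not_ge ?_
    calc ∑ a, X a ω ≤ ∑ a, (1 + if a ∈ J then r else 0) := by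
          gcongr with a
          split_ifs with ha
          exacts [hle a ha, by linarith [hω a ha]]
      _ = Fintype.card α + r * J.card := by
          rw [Finset.sum_add_distrib, Finset.sum_ite_mem]
          simp [mul_comm]
      _ ≤ Fintype.card α + (t - Fintype.card α) := by
          gcongr
          rw [div_mul_comm]
          exact mul_le_of_le_one_left (by linarith) (div_self_le_one _)
      _ = t := by ring
  calc P {ω | t < ∑ a, X a ω} ≤ P (⋃ a ∈ J, {ω | 1 + r < X a ω}) := measure_mono_ae hexceed
    _ ≤ ∑ a ∈ J, P {ω | 1 + r < X a ω} := measure_biUnion_finset_le _ _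
    _ ≤ ∑ a ∈ J, c a * ENNReal.ofReal (2 / (1 + r - 1)) := by
        refine Finset.sum_le_sum fun a ha => hc a ha _ (lt_add_of_pos_right 1 (div_pos ?_ ?_))
        · linarith
        · exact_mod_cast Finset.card_pos.2 ⟨a, ha⟩
    _ = (∑ a ∈ J, c a) * ENNReal.ofReal (2 * J.card / (t - Fintype.card α)) := by
        rw [← Finset.sum_mul, add_sub_cancel_left, div_div_eq_mul_div]

section SparseLaw

variable {ι m : Type*} [Fintype m] [DecidableEq m] {e : m → m → ι}

lemma adjugate_coordMatrix_update [DecidableEq ι] (he : Function.Injective2 e) (x : ι → ℝ)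
    (i j l : m) (a : ℝ) :
    (coordMatrix e (Function.update x (e i j) a)).adjugate j l =
      (coordMatrix e x).adjugate j l :=
  adjugate_eq_of_forall_ne
    (fun _ _ hl => Function.update_of_ne (fun h => hl (he h).2) a x) l

lemma det_coordMatrix_update [DecidableEq ι] (he : Function.Injective2 e) (x : ι → ℝ) (i j : m)
    (a : ℝ) :
    (coordMatrix e (Function.update x (e i j) a)).det =
      (coordMatrix e x).det + (a - x (e i j)) * (coordMatrix e x).adjugate j i := by
  rw [Matrix.det_eq_sum_mul_adjugate_col _ j, Matrix.det_eq_sum_mul_adjugate_col _ j,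
    ← sub_eq_iff_eq_add', ← Finset.sum_sub_distrib]
  simp only [adjugate_coordMatrix_update he, coordMatrix_apply]
  rw [Fintype.sum_eq_single i fun l hl => by
    rw [Function.update_of_ne fun h => hl (he h).1, sub_self], Function.update_self, sub_mul]

variable [Fintype ι] {μ : ι → Measure ℝ}

lemma measure_pi_lt_detColCond_le [∀ q, IsProbabilityMeasure (μ q)] (he : Function.Injective2 e)
    {s : ℝ} (hs : 1 < s) {j : m} {κ : m → ℝ≥0∞} (hκ : ∀ i, AbsDensityLE (μ (e i j)) (κ i)) :
    Measure.pi μ {x | s < detColCond (coordMatrix e x) j} ≤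
      (∑ i, κ i) * ENNReal.ofReal (2 / (s - 1)) := by
  classical
  exact (measure_mono fun _ hx => lt_detColCond (by linarith) hx).trans <|
    measure_pi_mul_abs_linearForm_lt_le (fun _ _ h => (he h).1)
      (measurable_adjugate_coordMatrix e j)
      (fun i l x a => adjugate_coordMatrix_update he x i j l a) hs hκ

/-- The number of entries of the `j`-th column of `coordMatrix e` that are coordinates in `U`, that
is, the number of random entries of that column. -/
def colWeight [DecidableEq ι] (U : Finset ι) (e : m → m → ι) (j : m) : ℕ :=
  Finset.card {i | e i j ∈ U}

/-- The laws `μ q` of the coordinates of a sparse random vector: the coordinates in `U` are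
atomless with density at most `κ / |x|`, all others are `0`. The Gaussian ensembles `N_S(Ā, σ²Id)`
and `N(b̄, σ²Id)` together form such a family. -/
structure SparseLaw (U : Finset ι) (μ : ι → Measure ℝ) (κ : ℝ≥0∞) : Prop where
  nullSingletonClass : ∀ q ∈ U, NullSingletonClass (μ q)
  absDensityLE : ∀ q ∈ U, AbsDensityLE (μ q) κ
  eq_dirac : ∀ q ∉ U, μ q = Measure.dirac 0

namespace SparseLaw

variable {U : Finset ι} {κ : ℝ≥0∞} [∀ q, IsProbabilityMeasure (μ q)]

lemma ae_det_ne_zero (h : SparseLaw U μ κ) (he : Function.Injective2 e) {z : ι → ℝ}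
    (hz : ∀ q ∉ U, z q = 0) (hdet : (coordMatrix e z).det ≠ 0) :
    ∀ᵐ x ∂Measure.pi μ, (coordMatrix e x).det ≠ 0 := by
  classical
  have hmeas : Measurable fun x => (coordMatrix e x).det :=
    (Continuous.matrix_det (by unfold coordMatrix; fun_prop)).measurable
  refine ae_pi_of_forall_ae_update (hmeas (measurableSet_singleton 0).compl) hdet
    fun q x hx hxz => ?_
  by_cases hq : q ∈ U
  · by_cases hqe : ∃ i j, e i j = q
    · obtain ⟨i, j, rfl⟩ := hqe
      have := h.nullSingletonClass _ hq
      filter_upwards [(Set.countable_singleton (x (e i j) - (coordMatrix e x).det /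
        (coordMatrix e x).adjugate j i)).ae_notMem (μ (e i j))] with a ha hzero
      rw [det_coordMatrix_update he] at hzero
      have hcof : (coordMatrix e x).adjugate j i ≠ 0 := fun hcof => hx (by simpa [hcof] using hzero)
      refine ha (Set.mem_singleton_iff.2 ?_)
      field_simp
      linarith
    · push Not at hqe
      have hupdate : ∀ a, coordMatrix e (Function.update x q a) = coordMatrix e x := fun a => by
        ext i j
        exact Function.update_of_ne (hqe i j) a x
      exact .of_forall fun a => by rwa [hupdate]
  · have hself : Function.update x q 0 = x := by rw [← hz q hq, ← hxz, Function.update_eq_self]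
    rwa [h.eq_dirac q hq, ae_dirac_eq, Filter.eventually_pure, hself]

lemma ae_eq_zero (h : SparseLaw U μ κ) : ∀ᵐ x ∂Measure.pi μ, ∀ q ∉ U, x q = 0 := by
  classical
  refine ae_all_iff.2 fun q => ?_
  by_cases hq : q ∈ U
  · exact .of_forall fun _ hq' => absurd hq hq'
  · have hzero : ∀ᵐ a ∂μ q, a = 0 := by
      rw [h.eq_dirac q hq, ae_dirac_eq]
      exact rfl
    filter_upwards [Measure.tendsto_eval_ae_ae.eventually hzero] with x hx _ using hx

variable [DecidableEq ι]

lemma ae_detColCond_le_one (h : SparseLaw U μ κ) {j : m} (hj : colWeight U e j ≤ 1) :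
    ∀ᵐ x ∂Measure.pi μ, detColCond (coordMatrix e x) j ≤ 1 := by
  have : Nonempty m := ⟨j⟩
  obtain ⟨i₀, hi₀⟩ := Finset.card_le_one_iff_subset_singleton.1 hj
  filter_upwards [h.ae_eq_zero] with x hx
  refine detColCond_le_one (i₀ := i₀) fun i hi => hx _ fun hU => hi ?_
  exact Finset.mem_singleton.1 (hi₀ (Finset.mem_filter_univ i |>.2 hU))

lemma measure_lt_detColCond_le (h : SparseLaw U μ κ) (he : Function.Injective2 e) {s : ℝ}
    (hs : 1 < s) (j : m) :
    Measure.pi μ {x | s < detColCond (coordMatrix e x) j} ≤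
      colWeight U e j * κ * ENNReal.ofReal (2 / (s - 1)) := by
  refine (measure_pi_lt_detColCond_le he hs (κ := fun i => if e i j ∈ U then κ else 0)
    fun i => ?_).trans_eq ?_
  · split_ifs with hU
    · exact h.absDensityLE _ hU
    · exact h.eq_dirac _ hU ▸ AbsDensityLE.dirac_zero
  · rw [← Finset.sum_filter, Finset.sum_const, nsmul_eq_mul, colWeight]

lemma measure_lt_sum_detColCond_le {α : Type*} [Fintype α] (h : SparseLaw U μ κ)
    {e : α → m → m → ι} (he : ∀ a, Function.Injective2 (e a)) (col : α → m) {t : ℝ}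
    (ht : Fintype.card α < t) :
    Measure.pi μ {x | t < ∑ a, detColCond (coordMatrix (e a) x) (col a)} ≤
      κ * ENNReal.ofReal (2 * (Finset.card {a | 2 ≤ colWeight U (e a) (col a)} *
        ∑ a with 2 ≤ colWeight U (e a) (col a), colWeight U (e a) (col a) : ℕ) /
          (t - Fintype.card α)) := by
  refine (measure_lt_sum_le (J := {a | 2 ≤ colWeight U (e a) (col a)}) (fun a ha => ?_)
    (fun a _ r hr => h.measure_lt_detColCond_le (he a) hr (col a)) ht).trans_eq ?_
  · exact h.ae_detColCond_le_one (by simpa [Nat.lt_succ_iff] using ha)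
  · rw [← Finset.sum_mul, mul_comm _ κ, mul_assoc, ← Nat.cast_sum, ← ENNReal.ofReal_natCast,
      ← ENNReal.ofReal_mul (Nat.cast_nonneg _)]
    congr 2
    push_cast
    ring

end SparseLaw

end SparseLaw

section ColumnCounting

variable {α : Type*} [Fintype α] [DecidableEq α]

/-- If `s j` is the number of random entries in column `j` of `A`, then `cramerWeight k s` counts
the random entries in the columns of `A` (on the left) and of `A` with column `k` replaced by a
completely random vector (on the right). -/
def cramerWeight (k : α) (s : α → ℕ) : α ⊕ α → ℕ :=
  Sum.elim s (Function.update s k (Fintype.card α))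

lemma cramerWeight_inl (k : α) (s : α → ℕ) (j : α) : cramerWeight k s (.inl j) = s j :=
  rfl

lemma cramerWeight_inr (k : α) (s : α → ℕ) (j : α) :
    cramerWeight k s (.inr j) = Function.update s k (Fintype.card α) j :=
  rfl

lemma sum_comp_update_le (g : ℕ → ℕ) (s : α → ℕ) (k : α) (w : ℕ) :
    ∑ j, g (Function.update s k w j) ≤ ∑ j, g (s j) + g w := by
  rw [← Finset.add_sum_erase _ _ (Finset.mem_univ k), Function.update_self, add_comm]
  gcongr
  rw [Finset.sum_congr rfl fun j hj => by rw [Function.update_of_ne (Finset.ne_of_mem_erase hj)]]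
  exact Finset.sum_le_sum_of_subset (Finset.subset_univ _)

lemma sum_filter_cramerWeight_le (g : ℕ → ℕ) (k : α) (s : α → ℕ) :
    ∑ a with 2 ≤ cramerWeight k s a, g (cramerWeight k s a) ≤
      2 * ∑ j with 2 ≤ s j, g (s j) + g (Fintype.card α) := by
  have hupdate := sum_comp_update_le (fun v => if 2 ≤ v then g v else 0) s k (Fintype.card α)
  have hw : (if 2 ≤ Fintype.card α then g (Fintype.card α) else 0) ≤ g (Fintype.card α) := by
    split_ifs <;> omega
  simp only [Finset.sum_filter, Fintype.sum_sum_type, cramerWeight_inl, cramerWeight_inr]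
  linarith

lemma card_mul_sum_filter_cramerWeight_le (k : α) {s : α → ℕ} (hs : ∀ j, 1 ≤ s j) :
    Finset.card {a | 2 ≤ cramerWeight k s a} *
        ∑ a with 2 ≤ cramerWeight k s a, cramerWeight k s a ≤ 4 * (∑ j, s j) ^ 2 := by
  set n₂ := Finset.card {j | 2 ≤ s j}
  set n₁ := Finset.card {j | ¬2 ≤ s j}
  set T := ∑ j with 2 ≤ s j, s j
  have hn : n₂ + n₁ = Fintype.card α := Finset.card_filter_add_card_filter_not (2 ≤ s ·)
  have hT : n₂ * 2 ≤ T :=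
    Finset.card_nsmul_le_sum _ s 2 fun j hj => (Finset.mem_filter.1 hj).2
  have hsum : T + n₁ ≤ ∑ j, s j := by
    rw [← Finset.sum_filter_add_sum_filter_not _ (2 ≤ s ·)]
    gcongr
    exact (mul_one n₁).symm.trans_le (Finset.card_nsmul_le_sum _ s 1 fun j _ => hs j)
  calc Finset.card {a | 2 ≤ cramerWeight k s a} *
        ∑ a with 2 ≤ cramerWeight k s a, cramerWeight k s a
      ≤ (2 * n₂ + 1) * (2 * T + (n₂ + n₁)) := by
        gcongr
        · simpa using sum_filter_cramerWeight_le (fun _ => 1) k s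
        · exact hn ▸ sum_filter_cramerWeight_le id k s
    _ ≤ 4 * (T + n₁) ^ 2 := by
        rcases Nat.eq_zero_or_pos n₂ with h₂ | h₂
        · rw [h₂]
          nlinarith [Nat.le_self_pow two_ne_zero (T + n₁)]
        · nlinarith
    _ ≤ 4 * (∑ j, s j) ^ 2 := by gcongr

end ColumnCounting

section LinearSystem

variable {n : ℕ} {S : Finset (Fin n × Fin n)}

lemma injective2_matrixIndex : Function.Injective2 (matrixIndex (n := n)) := by
  rintro i i' j j' h
  exact Prod.mk.inj (Sum.inl_injective h)

lemma injective2_cramerIndex (k : Fin n) : Function.Injective2 (cramerIndex k) := by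
  intro i i' j j' h
  unfold cramerIndex at h
  split_ifs at h with hj hj' <;> simp_all

lemma colWeight_matrixIndex (S : Finset (Fin n × Fin n)) (j : Fin n) :
    colWeight (S.disjSum Finset.univ) matrixIndex j = Finset.card {i | (i, j) ∈ S} := by
  simp only [colWeight, matrixIndex, Finset.inl_mem_disjSum]

lemma colWeight_cramerIndex (S : Finset (Fin n × Fin n)) (k : Fin n) :
    colWeight (S.disjSum Finset.univ) (cramerIndex k) =
      Function.update (colWeight (S.disjSum Finset.univ) matrixIndex) k n := by
  ext j
  rcases eq_or_ne j k with rfl | hj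
  · simp [colWeight, cramerIndex]
  · simp [colWeight, cramerIndex, matrixIndex, hj]

lemma sum_colWeight_matrixIndex (S : Finset (Fin n × Fin n)) :
    ∑ j, colWeight (S.disjSum Finset.univ) matrixIndex j = S.card := by
  rw [Finset.card_eq_sum_card_fiberwise (f := Prod.snd) (t := Finset.univ) (by simp)]
  refine Finset.sum_congr rfl fun j _ => ?_
  rw [colWeight_matrixIndex]
  refine Finset.card_bij (fun i _ => (i, j)) ?_ ?_ ?_ <;> aesop

lemma Admissible.one_le_colWeight (hS : Admissible S) (j : Fin n) :
    1 ≤ colWeight (S.disjSum Finset.univ) matrixIndex j := by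
  obtain ⟨B, hB, hdet⟩ := hS
  by_contra! h
  rw [Nat.lt_one_iff, colWeight_matrixIndex, Finset.card_eq_zero,
    Finset.filter_eq_empty_iff] at h
  exact hdet.ne_zero
    (Matrix.det_eq_zero_of_column_eq_zero j fun i => hB i j (h (Finset.mem_univ i)))

lemma Admissible.le_card (hS : Admissible S) : n ≤ S.card := by
  rw [← sum_colWeight_matrixIndex]
  simpa using Finset.card_nsmul_le_sum Finset.univ _ 1 fun j _ => hS.one_le_colWeight j

variable {μ : (Fin n × Fin n) ⊕ Fin n → Measure ℝ} [∀ q, IsProbabilityMeasure (μ q)] {κ : ℝ≥0∞}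

lemma SparseLaw.ae_cLin_le (h : SparseLaw (S.disjSum Finset.univ) μ κ) (hS : Admissible S)
    (k : Fin n) :
    ∀ᵐ x ∂Measure.pi μ, cLin k (funToMat' x) (funToVec x) ≤
      ENNReal.ofReal (∑ j, detColCond (coordMatrix matrixIndex x) j +
        ∑ j, detColCond (coordMatrix (cramerIndex k) x) j) := by
  obtain ⟨B, hB, hdet⟩ := hS
  have hzero : ∀ q ∉ S.disjSum Finset.univ, pairToFun B (B.col k) q = 0 := by
    rintro (⟨i, j⟩ | i) hq
    · exact hB i j (by simpa using hq)
    · simp at hq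
  have hdetA : (coordMatrix matrixIndex (pairToFun B (B.col k))).det ≠ 0 := hdet.ne_zero
  have hdetAb : (coordMatrix (cramerIndex k) (pairToFun B (B.col k))).det ≠ 0 := by
    rw [coordMatrix_cramerIndex]
    exact (congrArg Matrix.det (Matrix.updateCol_eq_self B k)).trans_ne hdet.ne_zero
  filter_upwards [h.ae_det_ne_zero injective2_matrixIndex hzero hdetA,
    h.ae_det_ne_zero (injective2_cramerIndex k) hzero hdetAb] with x hA hAb
  rw [coordMatrix_cramerIndex] at hAb ⊢
  exact cLin_le_sum_detColCond hA hAb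

theorem SparseLaw.measure_lt_cLin_le (h : SparseLaw (S.disjSum Finset.univ) μ κ)
    (hS : Admissible S) (k : Fin n) {t : ℝ} (ht : 2 * n < t) :
    Measure.pi μ {x | ENNReal.ofReal t < cLin k (funToMat' x) (funToVec x)} ≤
      κ * ENNReal.ofReal (8 * S.card ^ 2 / (t - 2 * n)) := by
  let s := colWeight (S.disjSum Finset.univ) (matrixIndex (n := n))
  let e : Fin n ⊕ Fin n → Fin n → Fin n → (Fin n × Fin n) ⊕ Fin n :=
    Sum.elim (fun _ => matrixIndex) fun _ => cramerIndex k
  let col : Fin n ⊕ Fin n → Fin n := Sum.elim id id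
  have he : ∀ a, Function.Injective2 (e a) :=
    Sum.rec (fun _ => injective2_matrixIndex) fun _ => injective2_cramerIndex k
  have hweight : ∀ a, colWeight (S.disjSum Finset.univ) (e a) (col a) = cramerWeight k s a := by
    rintro (j | j)
    · rfl
    · rw [cramerWeight_inr, Fintype.card_fin, ← colWeight_cramerIndex]
      rfl
  have hcard : (Fintype.card (Fin n ⊕ Fin n) : ℝ) = 2 * n := by
    rw [Fintype.card_sum, Fintype.card_fin, ← two_mul, Nat.cast_mul, Nat.cast_ofNat]
  have hcount := card_mul_sum_filter_cramerWeight_le k (s := s) hS.one_le_colWeight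
  have hbound := h.measure_lt_sum_detColCond_le he col (hcard ▸ ht)
  rw [sum_colWeight_matrixIndex] at hcount
  simp only [hcard, hweight, Fintype.sum_sum_type] at hbound
  calc Measure.pi μ {x | ENNReal.ofReal t < cLin k (funToMat' x) (funToVec x)}
      ≤ Measure.pi μ {x | t < ∑ j, detColCond (coordMatrix matrixIndex x) j +
          ∑ j, detColCond (coordMatrix (cramerIndex k) x) j} := by
        refine measure_mono_ae ?_
        filter_upwards [h.ae_cLin_le hS k] with x hx hlt
        exact lt_of_not_ge fun hle =>
          (hlt.trans_le hx).not_ge (ENNReal.ofReal_le_ofReal hle)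
    _ ≤ _ := hbound
    _ ≤ κ * ENNReal.ofReal (2 * (4 * S.card ^ 2 : ℕ) / (t - 2 * n)) := by
        have : 0 < t - 2 * n := by linarith
        gcongr
    _ = κ * ENNReal.ofReal (8 * S.card ^ 2 / (t - 2 * n)) := by
        push_cast
        rw [← mul_assoc]
        norm_num

end LinearSystem

section GaussianSystem

lemma measurePreserving_dite_pi {ι : Type*} [Fintype ι] {X : ι → Type*}
    [∀ i, MeasurableSpace (X i)] (ν : ∀ i, Measure (X i)) [∀ i, IsProbabilityMeasure (ν i)]
    (S : Finset ι) [DecidablePred (· ∈ S)] (z : ∀ i, X i) :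
    MeasurePreserving (fun (g : ∀ i : S, X i) i => if h : i ∈ S then g ⟨i, h⟩ else z i)
      (Measure.pi fun i : S => ν i)
      (Measure.pi fun i => if i ∈ S then ν i else Measure.dirac (z i)) := by
  have hmeas : Measurable fun (g : ∀ i : S, X i) i => if h : i ∈ S then g ⟨i, h⟩ else z i :=
    measurable_pi_lambda _ fun i => by split_ifs <;> fun_prop
  have (i : ι) : IsProbabilityMeasure (if i ∈ S then ν i else Measure.dirac (z i)) := by
    split_ifs <;> infer_instance
  refine ⟨hmeas, (Measure.pi_eq fun B hB => ?_).symm⟩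
  rw [Measure.map_apply hmeas (.univ_pi hB)]
  by_cases hz : ∀ i ∉ S, z i ∈ B i
  · have hpre : (fun (g : ∀ i : S, X i) i => if h : i ∈ S then g ⟨i, h⟩ else z i) ⁻¹'
        Set.univ.pi B = Set.univ.pi fun i : S => B i := by
      ext g
      simp only [Set.mem_preimage, Set.mem_univ_pi]
      refine ⟨fun hg i => by simpa using hg i, fun hg i => ?_⟩
      split_ifs with hi
      exacts [hg ⟨i, hi⟩, hz i hi]
    rw [hpre, Measure.pi_pi, Finset.prod_coe_sort S fun i => ν i (B i)]
    refine (Finset.prod_congr rfl fun i hi => by rw [if_pos hi]).trans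
      (Finset.prod_subset S.subset_univ fun i _ hi => ?_)
    rw [if_neg hi, Measure.dirac_apply_of_mem (hz i hi)]
  · push Not at hz
    obtain ⟨i, hi, hzi⟩ := hz
    have hpre : (fun (g : ∀ i : S, X i) i => if h : i ∈ S then g ⟨i, h⟩ else z i) ⁻¹'
        Set.univ.pi B = ∅ :=
      Set.eq_empty_of_forall_notMem fun g hg => hzi (by simpa [hi] using hg i trivial)
    rw [hpre, measure_empty]
    refine (Finset.prod_eq_zero (Finset.mem_univ i) ?_).symm
    rw [if_neg hi, Measure.dirac_apply' _ (hB i), Set.indicator_of_notMem hzi]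

instance isProbabilityMeasure_gaussianReal_sq (m σ : ℝ) :
    IsProbabilityMeasure (gaussianReal m ⟨σ ^ 2, sq_nonneg σ⟩) :=
  instIsProbabilityMeasureGaussianReal _ _

variable {n : ℕ} {S : Finset (Fin n × Fin n)} {Abar : Matrix (Fin n) (Fin n) ℝ}
  {bbar : Fin n → ℝ} {σ : ℝ}

/-- The laws of the individual coordinates of the data vector of `(A, b)` when
`A ~ N_S(Ā, σ²Id)` and `b ~ N(b̄, σ²Id)`. -/
noncomputable def systemLaw (S : Finset (Fin n × Fin n)) (Abar : Matrix (Fin n) (Fin n) ℝ)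
    (bbar : Fin n → ℝ) (σ : ℝ) : (Fin n × Fin n) ⊕ Fin n → Measure ℝ :=
  Sum.elim
    (fun p => if p ∈ S then gaussianReal (Abar p.1 p.2) ⟨σ ^ 2, sq_nonneg σ⟩ else Measure.dirac 0)
    fun i => gaussianReal (bbar i) ⟨σ ^ 2, sq_nonneg σ⟩

instance isProbabilityMeasure_systemLaw (q : (Fin n × Fin n) ⊕ Fin n) :
    IsProbabilityMeasure (systemLaw S Abar bbar σ q) := by
  rcases q with p | i
  · unfold systemLaw
    rw [Sum.elim_inl]
    split_ifs <;> infer_instance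
  · exact isProbabilityMeasure_gaussianReal_sq _ _

lemma measurePreserving_matToFun_sparseGaussian :
    MeasurePreserving matToFun (sparseGaussian S Abar σ)
      (Measure.pi fun p => systemLaw S Abar bbar σ (Sum.inl p)) := by
  have hentry (i j : Fin n) : Measurable fun A : Matrix (Fin n) (Fin n) ℝ => A i j :=
    (measurable_pi_apply j).comp (measurable_pi_apply (X := fun _ : Fin n => Fin n → ℝ) i)
  have hmatToFun : Measurable (matToFun (n := n)) :=
    measurable_pi_lambda _ fun p => hentry p.1 p.2
  have hextend : Measurable fun g : S → ℝ => (Matrix.of fun i j =>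
      if h : (i, j) ∈ S then g ⟨(i, j), h⟩ else 0 : Matrix (Fin n) (Fin n) ℝ) :=
    measurable_pi_lambda _ fun i => measurable_pi_lambda _ fun j => by
      simp only [Matrix.of_apply]
      split_ifs <;> fun_prop
  refine ⟨hmatToFun, ?_⟩
  rw [sparseGaussian, Measure.map_map hmatToFun hextend]
  have hdite := measurePreserving_dite_pi (X := fun _ => ℝ)
    (fun p => gaussianReal (Abar p.1 p.2) ⟨σ ^ 2, sq_nonneg σ⟩) S (fun _ => 0)
  exact hdite.map_eq

lemma measurePreserving_pairToFun :
    MeasurePreserving (fun q : Matrix (Fin n) (Fin n) ℝ × (Fin n → ℝ) => pairToFun q.1 q.2)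
      ((sparseGaussian S Abar σ).prod (vecGaussian bbar σ))
      (Measure.pi (systemLaw S Abar bbar σ)) := by
  have hmat := measurePreserving_matToFun_sparseGaussian (S := S) (Abar := Abar)
    (bbar := bbar) (σ := σ)
  have : IsProbabilityMeasure ((sparseGaussian S Abar σ).map matToFun) := by
    rw [hmat.map_eq]
    infer_instance
  have : IsProbabilityMeasure (sparseGaussian S Abar σ) :=
    Measure.isProbabilityMeasure_of_map matToFun
  have : IsProbabilityMeasure (vecGaussian bbar σ) := by
    unfold vecGaussian
    infer_instance
  have hpair : (fun q : Matrix (Fin n) (Fin n) ℝ × (Fin n → ℝ) => pairToFun q.1 q.2) =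
      (MeasurableEquiv.sumPiEquivProdPi fun _ => ℝ).symm ∘ Prod.map matToFun id := by
    ext q (p | i) <;> rfl
  rw [hpair]
  exact (measurePreserving_sumPiEquivProdPi_symm (systemLaw S Abar bbar σ)).comp
    (hmat.prod (MeasurePreserving.id (vecGaussian bbar σ)))

lemma nnreal_sq_ne_zero (hσ : 0 < σ) : (⟨σ ^ 2, sq_nonneg σ⟩ : NNReal) ≠ 0 :=
  NNReal.coe_ne_zero.1 (pow_pos hσ 2).ne'

lemma absDensityLE_gaussianReal_sq {m M : ℝ} (hm : |m| ≤ M) (hσ : 0 < σ) :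
    AbsDensityLE (gaussianReal m ⟨σ ^ 2, sq_nonneg σ⟩)
      (ENNReal.ofReal ((M + σ) / σ * (√(2 / Real.pi) / 2))) := by
  refine (absDensityLE_gaussianReal m (nnreal_sq_ne_zero hσ)).mono
    (ENNReal.ofReal_le_ofReal ?_)
  calc (|m| + √(σ ^ 2)) / √(2 * Real.pi * σ ^ 2)
      ≤ (M + σ) / √(2 * Real.pi * σ ^ 2) := by
        rw [Real.sqrt_sq hσ.le]
        gcongr
    _ = (M + σ) / σ * (√(2 / Real.pi) / 2) := by
        rw [Real.sqrt_mul (by positivity), Real.sqrt_sq hσ.le, Real.sqrt_mul zero_le_two,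
          Real.sqrt_div zero_le_two]
        field_simp
        rw [Real.sq_sqrt zero_le_two]

lemma sparseLaw_systemLaw {M : ℝ} (hA : ∀ p ∈ S, |Abar p.1 p.2| ≤ M) (hb : ∀ i, |bbar i| ≤ M)
    (hσ : 0 < σ) :
    SparseLaw (S.disjSum Finset.univ) (systemLaw S Abar bbar σ)
      (ENNReal.ofReal ((M + σ) / σ * (√(2 / Real.pi) / 2))) := by
  have hinl (p) (hp : p ∈ S) : systemLaw S Abar bbar σ (Sum.inl p) =
      gaussianReal (Abar p.1 p.2) ⟨σ ^ 2, sq_nonneg σ⟩ := if_pos hp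
  refine ⟨?_, ?_, ?_⟩
  · rintro (p | i) hq
    · rw [hinl p (Finset.inl_mem_disjSum.1 hq)]
      exact nullSingletonClass_gaussianReal (nnreal_sq_ne_zero hσ)
    · exact nullSingletonClass_gaussianReal (nnreal_sq_ne_zero hσ)
  · rintro (p | i) hq
    · have hp := Finset.inl_mem_disjSum.1 hq
      rw [hinl p hp]
      exact absDensityLE_gaussianReal_sq (hA p hp) hσ
    · exact absDensityLE_gaussianReal_sq (hb i) hσ
  · rintro (p | i) hq
    · exact if_neg fun hp => hq (Finset.inl_mem_disjSum.2 hp)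
    · exact absurd (Finset.inr_mem_disjSum.2 (Finset.mem_univ i)) hq

end GaussianSystem

theorem prob_cLin_gt_general {n : ℕ} {S : Finset (Fin n × Fin n)} (hS : Admissible S)
    {Abar : Matrix (Fin n) (Fin n) ℝ} {bbar : Fin n → ℝ} {M σ : ℝ}
    (hA : ∀ p ∈ S, |Abar p.1 p.2| ≤ M) (hb : ∀ i, |bbar i| ≤ M) (hσ : 0 < σ) (k : Fin n)
    {t : ℝ} (ht : 2 * n < t) :
    (sparseGaussian S Abar σ).prod (vecGaussian bbar σ)
        {p | ENNReal.ofReal t < cLin k p.1 p.2}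
      ≤ ENNReal.ofReal ((M + σ) / σ * (4 * (S.card : ℝ) ^ 2 / (t - 2 * n)) * √(2 / Real.pi)) := by
  have hM : 0 ≤ M := (abs_nonneg _).trans (hb k)
  have hpre := measurePreserving_pairToFun (S := S) (Abar := Abar) (bbar := bbar) (σ := σ)
  calc (sparseGaussian S Abar σ).prod (vecGaussian bbar σ)
        {p | ENNReal.ofReal t < cLin k p.1 p.2}
      ≤ Measure.pi (systemLaw S Abar bbar σ)
          {x | ENNReal.ofReal t < cLin k (funToMat' x) (funToVec x)} := by
        rw [← hpre.map_eq]
        exact Measure.le_map_apply hpre.aemeasurable _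
    _ ≤ ENNReal.ofReal ((M + σ) / σ * (√(2 / Real.pi) / 2)) *
          ENNReal.ofReal (8 * S.card ^ 2 / (t - 2 * n)) :=
        (sparseLaw_systemLaw hA hb hσ).measure_lt_cLin_le hS k ht
    _ = ENNReal.ofReal ((M + σ) / σ * (4 * (S.card : ℝ) ^ 2 / (t - 2 * n)) * √(2 / Real.pi)) := by
        rw [← ENNReal.ofReal_mul (by positivity)]
        congr 1
        ring

/-- Let `S ⊆ [n]²` be admissible, `Ā ∈ M_S`, `b̄ ∈ ℝⁿ` with
`‖Ā‖_max ≤ 1`, `‖b̄‖_∞ ≤ 1`, `σ > 0`, `A ~ N_S(Ā, σ²Id)` and `b ~ N(b̄, σ²Id)`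
independent, and `k ∈ [n]`. For every real `t > 2|S|`,
`Prob{c_k(A,b) > t} ≤ ((1+σ)/σ)·(4|S|²/(t−2|S|))·√(2/π)`. -/
theorem prob_cLin_gt {n : ℕ} (S : Finset (Fin n × Fin n)) (hS : Admissible S)
    (Abar : Matrix (Fin n) (Fin n) ℝ) (hsupp : ∀ i j, (i, j) ∉ S → Abar i j = 0)
    (hmax : ∀ i j, |Abar i j| ≤ 1) (bbar : Fin n → ℝ) (hbmax : ∀ i, |bbar i| ≤ 1)
    (σ : ℝ) (hσ : 0 < σ) (k : Fin n) (t : ℝ) (ht : 2 * (S.card : ℝ) < t) :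
    (sparseGaussian S Abar σ).prod (vecGaussian bbar σ)
        {p | ENNReal.ofReal t < cLin k p.1 p.2}
      ≤ ENNReal.ofReal ((1 + σ) / σ * (4 * (S.card : ℝ) ^ 2 / (t - 2 * S.card))
          * Real.sqrt (2 / Real.pi)) := by
  have hn : (n : ℝ) ≤ S.card := Nat.cast_le.2 hS.le_card
  have : 0 < t - 2 * S.card := sub_pos.2 ht
  refine (prob_cLin_gt_general hS (fun p _ => hmax p.1 p.2) hbmax hσ k
    (by linarith)).trans (ENNReal.ofReal_le_ofReal ?_)
  gcongr
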